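/- Let n, q ∈ ℕ with q ≥ 2 and p = (p₁,…,p_{q−1}) ∈ ℕ₀^{q−1} with I := { i : p_i ≠ 0 } nonempty. For every N ∈ ℕ there is a constant C_N such that, uniformly in k ∈ ℤⁿ and l ∈ (ℤⁿ)^{2q} satisfying |k| > U(l) := 36 (Σ_{i=1, i≠q}^{2q−1} |l_i|)⁴, one has | ∏_{i=1}^{q−1} |k + l̃_i|^{p_i} − Σ_{α=(α_i)_{i∈I} ∈ ∏_{i∈I}{0,…,N}^{p_i}} binom(1/2,α) · P_α(k,l) / |k|^{2|α|₁ − |p|₁} | ≤ C_N |k|^{|p|₁ − (N+1)/2}. -/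

import Mathlib

noncomputable section

/-- Euclidean norm of an integer vector `k ∈ ℤⁿ`. -/
def znorm {n : ℕ} (k : Fin n → ℤ) : ℝ := Real.sqrt (∑ i, ((k i : ℝ)) ^ 2)

/-- `l̃_j = l₁ + ⋯ + l_j + l_{q+1} + ⋯ + l_{q+j}` for `l ∈ (ℤⁿ)^{2q}`, `1 ≤ j ≤ q`. -/
def ltilde {q n : ℕ} (l : Fin (2 * q) → Fin n → ℤ) (j : ℕ) : Fin n → ℤ :=
  ∑ t ∈ Finset.univ.filter
      (fun t : Fin (2 * q) => (t : ℕ) < j ∨ (q ≤ (t : ℕ) ∧ (t : ℕ) < q + j)), l t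

/-- Generalized binomial coefficient `binom(x, m) = x(x−1)⋯(x−m+1)/m!`. -/
def gbinomR (x : ℝ) (m : ℕ) : ℝ := (∏ j ∈ Finset.range m, (x - (j : ℝ))) / (Nat.factorial m : ℝ)

/-- The value `P_α(k,l) = ∏_{i∈I} ∏_{j=1}^{pᵢ} (2⟨k,l̃ᵢ⟩ + |l̃ᵢ|²)^{α_{i,j}}`. -/
def PalphaVal {q n : ℕ} (p : Fin (q - 1) → ℕ) (N : ℕ)
    (α : ∀ i : Fin (q - 1), Fin (p i) → Fin (N + 1))
    (k : Fin n → ℤ) (l : Fin (2 * q) → Fin n → ℤ) : ℝ :=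
  ∏ i : Fin (q - 1), ∏ j : Fin (p i),
    (2 * (∑ a, (k a : ℝ) * ((ltilde l ((i : ℕ) + 1)) a : ℝ)) +
      ∑ a, ((ltilde l ((i : ℕ) + 1) a : ℝ)) ^ 2) ^ ((α i j : ℕ))

/-- `U(l) = 36 (Σ_{i=1, i≠q}^{2q-1} |lᵢ|)⁴`. -/
def Ubound {q n : ℕ} (l : Fin (2 * q) → Fin n → ℤ) : ℝ :=
  36 * (∑ t ∈ Finset.univ.filter
      (fun t : Fin (2 * q) => (t : ℕ) + 1 < 2 * q ∧ (t : ℕ) + 1 ≠ q), znorm (l t)) ^ 4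

theorem aux_prod_diff {ι : Type*} (s : Finset ι) (f g : ι → ℝ) (M ε : ℝ) (hM : 1 ≤ M)
    (hε : 0 ≤ ε) (hf : ∀ i, |f i| ≤ M) (hg : ∀ i, |g i| ≤ M) (hfg : ∀ i, |f i - g i| ≤ ε) :
    |∏ i ∈ s, f i - ∏ i ∈ s, g i| ≤ s.card * M ^ s.card * ε := by
  classical
  induction s using Finset.induction_on with
  | empty => simp
  | insert a s ha ih =>
    rw [Finset.prod_insert ha, Finset.prod_insert ha, Finset.card_insert_of_notMem ha]
    have hF : |∏ i ∈ s, f i| ≤ M ^ s.card := by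
      rw [Finset.abs_prod]
      calc ∏ i ∈ s, |f i| ≤ ∏ i ∈ s, M :=
            Finset.prod_le_prod (fun i _ => abs_nonneg _) (fun i _ => hf i)
        _ = M ^ s.card := by simp
    have hMc : 0 ≤ M ^ s.card := by positivity
    have e : f a * ∏ i ∈ s, f i - g a * ∏ i ∈ s, g i
        = (f a - g a) * ∏ i ∈ s, f i + g a * (∏ i ∈ s, f i - ∏ i ∈ s, g i) := by ring
    rw [e]
    calc |(f a - g a) * ∏ i ∈ s, f i + g a * (∏ i ∈ s, f i - ∏ i ∈ s, g i)|
        ≤ |f a - g a| * |∏ i ∈ s, f i| + |g a| * |∏ i ∈ s, f i - ∏ i ∈ s, g i| := by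
          rw [← abs_mul, ← abs_mul]; exact abs_add_le _ _
      _ ≤ ε * M ^ s.card + M * (s.card * M ^ s.card * ε) := by
          gcongr
          · exact hfg a
          · exact hg a
      _ ≤ M * (ε * M ^ s.card) + M * (s.card * M ^ s.card * ε) := by
          have : 0 ≤ ε * M ^ s.card := by positivity
          nlinarith
      _ = ((s.card + 1 : ℕ) : ℝ) * M ^ (s.card + 1) * ε := by push_cast; ring

theorem aux_gbinom (x : ℝ) (m : ℕ) : Ring.choose x m = gbinomR x m := by
  have h : (descPochhammer ℤ m).smeval x = ∏ j ∈ Finset.range m, (x - (j : ℝ)) := by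
    rw [← descPochhammer_eval_eq_prod_range, ← descPochhammer_map (Int.castRingHom ℝ),
      Polynomial.eval_map, ← Polynomial.aeval_eq_smeval, Polynomial.aeval_def]
    rfl
  rw [Ring.choose_eq_smul, gbinomR, h, smul_eq_mul]
  field_simp

theorem aux_taylor (N : ℕ) : ∃ C : ℝ, 0 < C ∧ ∀ x : ℝ, |x| ≤ 99 / 100 →
    |Real.sqrt (1 + x) - ∑ m : Fin (N + 1), gbinomR (1 / 2) (m : ℕ) * x ^ (m : ℕ)|
      ≤ C * |x| ^ (N + 1) := by
  have h := (Real.one_add_rpow_hasFPowerSeriesOnBall_zero (a := 1 / 2)).uniform_geometric_approx'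
    (r' := 995 / 1000) (by
      rw [← ENNReal.coe_one, ENNReal.coe_lt_coe, ← NNReal.coe_lt_coe]
      push_cast; norm_num)
  obtain ⟨a, ha, C, hC, h⟩ := h
  refine ⟨C * (a / (995 / 1000)) ^ (N + 1), ?_, fun x hx => ?_⟩
  · have := ha.1
    positivity
  have h1 := h x (by
    rw [mem_ball_zero_iff, Real.norm_eq_abs]; push_cast; linarith) (N + 1)
  rw [FormalMultilinearSeries.partialSum] at h1
  simp only [binomialSeries_apply, List.ofFn_const, List.prod_replicate, smul_eq_mul, aux_gbinom,
    zero_add, Real.norm_eq_abs] at h1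
  rw [Real.sqrt_eq_rpow, Fin.sum_univ_eq_sum_range (fun m => gbinomR (1 / 2) m * x ^ m)]
  refine h1.trans (le_of_eq ?_)
  push_cast
  rw [mul_assoc C, ← mul_pow]
  ring

theorem aux_znorm {n : ℕ} (k : Fin n → ℤ) :
    znorm k = ‖(WithLp.toLp 2 (fun i => (k i : ℝ)) : EuclideanSpace ℝ (Fin n))‖ := by
  rw [EuclideanSpace.norm_eq, znorm]
  simp

theorem aux_znorm_nonneg {n : ℕ} (k : Fin n → ℤ) : 0 ≤ znorm k := Real.sqrt_nonneg _

theorem aux_znorm_sq {n : ℕ} (k : Fin n → ℤ) : znorm k ^ 2 = ∑ i, (k i : ℝ) ^ 2 :=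
  Real.sq_sqrt (Finset.sum_nonneg fun _ _ => sq_nonneg _)

theorem aux_znorm_zero {n : ℕ} : znorm (0 : Fin n → ℤ) = 0 := by simp [znorm]

theorem aux_znorm_add {n : ℕ} (k l : Fin n → ℤ) : znorm (k + l) ≤ znorm k + znorm l := by
  rw [aux_znorm, aux_znorm, aux_znorm]
  refine le_trans (le_of_eq ?_) (norm_add_le _ _)
  congr 1
  ext i
  simp

theorem aux_znorm_one_le {n : ℕ} (k : Fin n → ℤ) (h : 0 < znorm k) : 1 ≤ znorm k := by
  have h2 : (0 : ℝ) < znorm k ^ 2 := by positivity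
  have h3 : (1 : ℝ) ≤ znorm k ^ 2 := by
    rw [aux_znorm_sq] at h2 ⊢
    have : (0 : ℤ) < ∑ i, (k i) ^ 2 := by exact_mod_cast h2
    exact_mod_cast this
  nlinarith

theorem aux_inner {n : ℕ} (k l : Fin n → ℤ) :
    |∑ a, (k a : ℝ) * (l a : ℝ)| ≤ znorm k * znorm l := by
  apply abs_le_of_sq_le_sq
  · rw [mul_pow, aux_znorm_sq, aux_znorm_sq]
    exact Finset.sum_mul_sq_le_sq_mul_sq _ _ _
  · exact mul_nonneg (aux_znorm_nonneg _) (aux_znorm_nonneg _)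

theorem aux_ltilde {q n : ℕ} (l : Fin (2 * q) → Fin n → ℤ) (i : Fin (q - 1)) :
    znorm (ltilde l ((i : ℕ) + 1)) ≤ ∑ t ∈ Finset.univ.filter
      (fun t : Fin (2 * q) => (t : ℕ) + 1 < 2 * q ∧ (t : ℕ) + 1 ≠ q), znorm (l t) := by
  unfold ltilde
  refine (Finset.le_sum_of_subadditive znorm aux_znorm_zero.le aux_znorm_add _ _).trans ?_
  apply Finset.sum_le_sum_of_subset_of_nonneg
  · intro t ht
    simp only [Finset.mem_filter, Finset.mem_univ, true_and] at ht ⊢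
    have := i.2
    omega
  · intro t _ _
    exact aux_znorm_nonneg _

theorem aux_small (K S L I : ℝ) (hK : 1 ≤ K) (hS : 0 ≤ S) (h : 36 * S ^ 4 < K) (hL : 0 ≤ L)
    (hLS : L ≤ S) (hI : |I| ≤ K * L) :
    |(2 * I + L ^ 2) / K ^ 2| ≤ 99 / 100 * (Real.sqrt K)⁻¹ := by
  obtain ⟨r, hr⟩ : ∃ r, r = Real.sqrt K := ⟨_, rfl⟩
  have hr1 : 1 ≤ r := by rw [hr]; exact Real.one_le_sqrt.2 hK
  have hrK : K = r ^ 2 := by rw [hr, Real.sq_sqrt (by linarith)]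
  rw [← hr]
  have h6 : 6 * S ^ 2 < r := by
    apply lt_of_pow_lt_pow_left₀ 2 (by linarith)
    rw [← hrK]; nlinarith
  have hSr : S ≤ 41 / 100 * r := by
    refine le_of_pow_le_pow_left₀ two_ne_zero (by linarith) ?_
    nlinarith
  have hL2 : L ^ 2 ≤ S ^ 2 := by gcongr
  have hr3 : r ≤ r ^ 3 := by nlinarith [sq_nonneg r]
  have hnum : |2 * I + L ^ 2| ≤ 99 / 100 * r ^ 3 := by
    have h1 : |2 * I + L ^ 2| ≤ 2 * |I| + L ^ 2 := by
      refine (abs_add_le _ _).trans ?_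
      rw [abs_mul, abs_of_nonneg (sq_nonneg L)]; norm_num
    have h2 : K * L ≤ r ^ 2 * (41 / 100 * r) := by
      rw [hrK]; gcongr; linarith
    nlinarith
  rw [abs_div, abs_of_pos (by positivity : (0 : ℝ) < K ^ 2), div_le_iff₀ (by positivity), hrK]
  refine hnum.trans (le_of_eq ?_)
  field_simp

/-- **Lemma.** For each `N ∈ ℕ` there is a constant `C_N` such that, uniformly in
`k ∈ ℤⁿ` and `l ∈ (ℤⁿ)^{2q}` with `|k| > U(l)`,
`| ∏_{i=1}^{q-1} |k+l̃ᵢ|^{pᵢ} − Σ_{α ∈ ∏_{i∈I}{0,…,N}^{pᵢ}} binom(1/2,α) P_α(k,l)/|k|^{2|α|₁-|p|₁} |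
  ≤ C_N |k|^{|p|₁ − (N+1)/2}`. -/
theorem prod_norm_expansion (n q : ℕ) (hn : 0 < n) (hq : 2 ≤ q)
    (p : Fin (q - 1) → ℕ) (hp : ∃ i, p i ≠ 0) (N : ℕ) (hN : 0 < N) :
    ∃ C : ℝ, ∀ (k : Fin n → ℤ) (l : Fin (2 * q) → Fin n → ℤ),
      Ubound l < znorm k →
      |(∏ i : Fin (q - 1), znorm (k + ltilde l ((i : ℕ) + 1)) ^ (p i)) -
          ∑ α : (∀ i : Fin (q - 1), Fin (p i) → Fin (N + 1)),
            (∏ i : Fin (q - 1), ∏ j : Fin (p i), gbinomR (1 / 2) ((α i j : ℕ))) *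
              PalphaVal p N α k l /
                znorm k ^ (((2 * ∑ i : Fin (q - 1), ∑ j : Fin (p i), ((α i j : ℕ)) : ℕ) : ℝ) -
                  ((∑ i, p i : ℕ) : ℝ))| ≤
        C * znorm k ^ ((((∑ i, p i : ℕ)) : ℝ) - ((N : ℝ) + 1) / 2) := by
  obtain ⟨C, hC, hT⟩ := aux_taylor N
  set c := Fintype.card (Σ i : Fin (q - 1), Fin (p i)) with hc
  refine ⟨c * (2 + C) ^ c * C, fun k l hkl => ?_⟩
  set K := znorm k with hKdef
  set S := ∑ t ∈ Finset.univ.filter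
      (fun t : Fin (2 * q) => (t : ℕ) + 1 < 2 * q ∧ (t : ℕ) + 1 ≠ q), znorm (l t) with hSdef
  have hS : 0 ≤ S := Finset.sum_nonneg fun _ _ => aux_znorm_nonneg _
  have hU : 36 * S ^ 4 < K := hkl
  have hK0 : 0 < K := lt_of_le_of_lt (by positivity) hU
  have hK1 : 1 ≤ K := aux_znorm_one_le k hK0
  have hr0 : 0 < Real.sqrt K := Real.sqrt_pos.2 hK0
  have hr1 : 1 ≤ Real.sqrt K := Real.one_le_sqrt.2 hK1
  have hrinv : (Real.sqrt K)⁻¹ ≤ 1 := inv_le_one_of_one_le₀ hr1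
  obtain ⟨y, hy⟩ : ∃ y : Fin (q - 1) → ℝ, y = fun i : Fin (q - 1) =>
    2 * (∑ a, (k a : ℝ) * ((ltilde l ((i : ℕ) + 1)) a : ℝ)) +
      ∑ a, ((ltilde l ((i : ℕ) + 1) a : ℝ)) ^ 2 := ⟨_, rfl⟩
  have hx : ∀ i, |y i / K ^ 2| ≤ 99 / 100 * (Real.sqrt K)⁻¹ := by
    intro i
    rw [hy]
    simp only
    rw [← aux_znorm_sq]
    exact aux_small K S _ _ hK1 hS hU (aux_znorm_nonneg _) (aux_ltilde l i) (aux_inner _ _)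
  have hx99 : ∀ i, |y i / K ^ 2| ≤ 99 / 100 := fun i => (hx i).trans (by linarith)
  have hnorm : ∀ i : Fin (q - 1), znorm (k + ltilde l ((i : ℕ) + 1))
      = K * Real.sqrt (1 + y i / K ^ 2) := by
    intro i
    have h1 : ∑ a, (((k + ltilde l ((i : ℕ) + 1)) a : ℤ) : ℝ) ^ 2
        = K ^ 2 * (1 + y i / K ^ 2) := by
      have : K ^ 2 * (1 + y i / K ^ 2) = K ^ 2 + y i := by field_simp
      rw [this, hKdef, aux_znorm_sq, hy]
      simp only [Finset.mul_sum, ← Finset.sum_add_distrib]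
      refine Finset.sum_congr rfl fun a _ => ?_
      simp only [Pi.add_apply]
      push_cast
      ring
    rw [znorm, h1, Real.sqrt_mul (sq_nonneg K), Real.sqrt_sq hK0.le]
  set P := ∑ i, p i with hP
  obtain ⟨f, hf⟩ : ∃ f : Fin (q - 1) → ℝ, f = fun i => Real.sqrt (1 + y i / K ^ 2) := ⟨_, rfl⟩
  obtain ⟨g, hg⟩ : ∃ g : Fin (q - 1) → ℝ, g = fun i =>
    ∑ m : Fin (N + 1), gbinomR (1 / 2) (m : ℕ) * (y i / K ^ 2) ^ (m : ℕ) := ⟨_, rfl⟩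
  have e1 : ∏ i : Fin (q - 1), znorm (k + ltilde l ((i : ℕ) + 1)) ^ (p i)
      = K ^ P * ∏ s : (Σ i : Fin (q - 1), Fin (p i)), f s.1 := by
    rw [Fintype.prod_sigma]
    simp only [hnorm, mul_pow, Finset.prod_mul_distrib, Finset.prod_const, Finset.card_univ,
      Fintype.card_fin, hf, hP, Finset.prod_pow_eq_pow_sum]
  have e2 : ∏ s : (Σ i : Fin (q - 1), Fin (p i)), g s.1
      = ∑ α : (∀ i : Fin (q - 1), Fin (p i) → Fin (N + 1)),
        ∏ i, ∏ j, gbinomR (1 / 2) (α i j : ℕ) * (y i / K ^ 2) ^ (α i j : ℕ) := by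
    rw [Fintype.prod_sigma]
    simp only [hg, Finset.prod_univ_sum, Fintype.piFinset_univ]
  have e3 : ∀ α : (∀ i : Fin (q - 1), Fin (p i) → Fin (N + 1)),
      (∏ i : Fin (q - 1), ∏ j : Fin (p i), gbinomR (1 / 2) ((α i j : ℕ))) *
              PalphaVal p N α k l /
                K ^ (((2 * ∑ i : Fin (q - 1), ∑ j : Fin (p i), ((α i j : ℕ)) : ℕ) : ℝ) -
                  (P : ℝ))
      = K ^ P * ∏ i, ∏ j, gbinomR (1 / 2) (α i j : ℕ) * (y i / K ^ 2) ^ (α i j : ℕ) := by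
    intro α
    have hPa : PalphaVal p N α k l = ∏ i, ∏ j, y i ^ (α i j : ℕ) := by rw [PalphaVal, hy]
    rw [hPa, Real.rpow_sub hK0, Real.rpow_natCast, Real.rpow_natCast]
    simp only [div_pow, Finset.prod_mul_distrib, Finset.prod_div_distrib,
      Finset.prod_pow_eq_pow_sum, pow_mul]
    field_simp
  simp only [e3]
  rw [← Finset.mul_sum, ← e2, e1, ← mul_sub, abs_mul, abs_of_pos (by positivity : 0 < K ^ P)]
  have hfg : ∀ i, |f i - g i| ≤ C * ((Real.sqrt K)⁻¹) ^ (N + 1) := by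
    intro i
    rw [hf, hg]
    refine (hT _ (hx99 i)).trans ?_
    have := (hx i).trans (by linarith [inv_pos.2 hr0] : _ ≤ (Real.sqrt K)⁻¹)
    gcongr
  have hε1 : ((Real.sqrt K)⁻¹) ^ (N + 1) ≤ 1 := pow_le_one₀ (by positivity) hrinv
  have hfb : ∀ i, |f i| ≤ 2 := by
    intro i
    rw [hf]
    simp only
    rw [abs_of_nonneg (Real.sqrt_nonneg _)]
    apply Real.sqrt_le_iff.2
    have := (abs_le.1 (hx99 i)).2
    constructor <;> linarith
  have hgb : ∀ i, |g i| ≤ 2 + C := by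
    intro i
    have h1 := hfb i
    have h2 := hfg i
    have h3 : C * ((Real.sqrt K)⁻¹) ^ (N + 1) ≤ C := by nlinarith
    have h4 : |g i| ≤ |f i| + |f i - g i| := by
      have := abs_sub_abs_le_abs_sub (g i) (f i)
      rw [abs_sub_comm (g i)] at this
      linarith
    linarith
  have hmain := aux_prod_diff (Finset.univ : Finset (Σ i : Fin (q - 1), Fin (p i)))
    (fun s => f s.1) (fun s => g s.1) (2 + C) (C * ((Real.sqrt K)⁻¹) ^ (N + 1)) (by linarith)
    (by positivity) (fun s => (hfb s.1).trans (by linarith)) (fun s => hgb s.1)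
    (fun s => hfg s.1)
  rw [Finset.card_univ, ← hc] at hmain
  have hpow : K ^ ((P : ℝ) - ((N : ℝ) + 1) / 2) = K ^ P * ((Real.sqrt K)⁻¹) ^ (N + 1) := by
    rw [Real.rpow_sub hK0, Real.rpow_natCast, inv_pow, div_eq_mul_inv, Real.sqrt_eq_rpow,
      ← Real.rpow_natCast (K ^ (1 / 2 : ℝ)), ← Real.rpow_mul hK0.le]
    congr 3
    push_cast
    ring
  rw [hpow]
  calc _ ≤ K ^ P * (c * (2 + C) ^ c * (C * ((Real.sqrt K)⁻¹) ^ (N + 1))) := by gcongr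
    _ = _ := by ring

end
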